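/- Alexandrov–Bakelman–Pucci–Krylov–Tso estimate with critical drift: Let Ω ⊂ ℝⁿ be a bounded domain of diameter at most r > 0, T > 0, and Q_Ω = Ω × (0,T). Let u ∈ C^{2,1}(Q_Ω) ∩ C(closure of Q_Ω) satisfy −u_t + Σ_{i,j} a_{ij} D_{ij}u + Σ_i b_i D_i u ≥ f at every point of Q_Ω, where f is measurable with ‖f‖_{L^n_x L^∞_t(Q_Ω)} := (∫_Ω (ess sup_{t∈(0,T)} |f(x,t)|)ⁿ dx)^{1/n} < ∞, and suppose u ≤ 0 on the parabolic boundary ∂_p Q_Ω = (∂Ω × (0,T)) ∪ (Ω × {0}). Then sup_{Q_Ω} u ≤ N · r · ‖f‖_{L^n_x L^∞_t(Q_Ω)}, where N is a positive constant depending only on n, ν and S. -/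

import Mathlib

open MeasureTheory ENNReal Metric Set RealInnerProductSpace

noncomputable section

/-- `n`-dimensional Euclidean space. -/
abbrev En (n : ℕ) : Type := EuclideanSpace ℝ (Fin n)

variable {n : ℕ}

/-- Time derivative `u_t`. -/
def Dt (u : En n × ℝ → ℝ) (X : En n × ℝ) : ℝ :=
  deriv (fun t => u (X.1, t)) X.2

/-- First spatial derivative `D_i u`. -/
def Dx (u : En n × ℝ → ℝ) (i : Fin n) (X : En n × ℝ) : ℝ :=
  fderiv ℝ (fun x => u (x, X.2)) X.1 (EuclideanSpace.single i 1)

/-- Second spatial derivative `D_{ij} u`. -/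
def Dxx (u : En n × ℝ → ℝ) (i j : Fin n) (X : En n × ℝ) : ℝ :=
  Dx (Dx u j) i X

/-- `u` is of class `C^{2,1}` on `Q`: `u`, `D_i u`, `D_{ij} u`, `u_t` exist and are
continuous on `Q`. -/
structure IsC21 (u : En n × ℝ → ℝ) (Q : Set (En n × ℝ)) : Prop where
  cont : ContinuousOn u Q
  diff_t : ∀ X ∈ Q, DifferentiableAt ℝ (fun t => u (X.1, t)) X.2
  diff_x : ∀ X ∈ Q, DifferentiableAt ℝ (fun x => u (x, X.2)) X.1
  diff_xx : ∀ j : Fin n, ∀ X ∈ Q, DifferentiableAt ℝ (fun x => Dx u j (x, X.2)) X.1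
  cont_t : ContinuousOn (Dt u) Q
  cont_x : ∀ i, ContinuousOn (Dx u i) Q
  cont_xx : ∀ i j, ContinuousOn (Dxx u i j) Q

/-- Uniform parabolicity with constant `ν` on `Q`:
`ν⁻¹|ξ|² ≤ Σ a_ij ξ_i ξ_j` and `Σ a_ij² ≤ ν²`. -/
def UnifParabolic (ν : ℝ) (a : En n × ℝ → Matrix (Fin n) (Fin n) ℝ)
    (Q : Set (En n × ℝ)) : Prop :=
  ∀ X ∈ Q, (∀ ξ : Fin n → ℝ, ν⁻¹ * (∑ i, ξ i ^ 2) ≤ ∑ i, ∑ j, a X i j * ξ i * ξ j) ∧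
    (∑ i, ∑ j, (a X i j) ^ 2) ≤ ν ^ 2

/-- `Lu = Σ_{ij} a_ij D_ij u + Σ_i b_i D_i u`. -/
def Lop (a : En n × ℝ → Matrix (Fin n) (Fin n) ℝ) (b : En n × ℝ → En n)
    (u : En n × ℝ → ℝ) (X : En n × ℝ) : ℝ :=
  (∑ i, ∑ j, a X i j * Dxx u i j X) + ∑ i, b X i * Dx u i X

/-- `∫ (ess sup_t |f(x,t)|)ⁿ dx`, the `n`-th power of the `L^n_x L^∞_t` norm of `f`
over the set `Q ⊆ ℝⁿ × ℝ`. -/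
def LxnLtinfPow {E : Type*} [NNNorm E] (f : En n × ℝ → E) (Q : Set (En n × ℝ)) : ℝ≥0∞ :=
  ∫⁻ x, (essSup (fun t => (‖f (x, t)‖₊ : ℝ≥0∞)) (volume.restrict {t | (x, t) ∈ Q})) ^ n

/-- The `L^n_x L^∞_t` norm of `f` over `Q`. -/
def LxnLtinf {E : Type*} [NNNorm E] (f : En n × ℝ → E) (Q : Set (En n × ℝ)) : ℝ≥0∞ :=
  (LxnLtinfPow f Q) ^ (1 / (n : ℝ))

/-- The box `B_ρ(y) × (t₁, t₂)`. -/
def box (y : En n) (ρ t₁ t₂ : ℝ) : Set (En n × ℝ) := ball y ρ ×ˢ Ioo t₁ t₂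

/-- The standard parabolic cylinder `Q_r(Y) = B_r(y) × (s - r², s)`. -/
def pcyl (Y : En n × ℝ) (r : ℝ) : Set (En n × ℝ) := box Y.1 r (Y.2 - r ^ 2) Y.2

/-- The slanted cylinder `V_r(Y) = {(x,t) : |x - (t/s)y| < r, 0 < t < s}`. -/
def slantCyl (Y : En n × ℝ) (r : ℝ) : Set (En n × ℝ) :=
  {X | ‖X.1 - (X.2 / Y.2) • Y.1‖ < r ∧ 0 < X.2 ∧ X.2 < Y.2}

/-- Supremum of the positive part `u₊` over a set `A`. -/
def supPos (u : En n × ℝ → ℝ) (A : Set (En n × ℝ)) : ℝ :=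
  sSup ((fun X => max (u X) 0) '' A)

/-- `Ω` is a Lipschitz domain with character `(rΩ, mΩ)`: at every boundary point `y`
there is a coordinate frame, encoded by the unit "vertical" direction `e`, in which
`Ω ∩ B_{rΩ}(y)` is the region above the graph of an `mΩ`-Lipschitz function `φ`
of the tangential variables. -/
def IsLipschitzDomain (Ω : Set (En n)) (rΩ mΩ : ℝ) : Prop :=
  0 < rΩ ∧ 0 ≤ mΩ ∧
  ∀ y ∈ frontier Ω, ∃ (e : En n) (φ : En n → ℝ),
    ‖e‖ = 1 ∧ LipschitzWith (Real.toNNReal mΩ) φ ∧ φ 0 = 0 ∧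
    (∀ x, x ∈ Ω ∩ ball y rΩ ↔
      dist x y < rΩ ∧ φ ((x - y) - ⟪x - y, e⟫ • e) < ⟪x - y, e⟫) ∧
    (∀ ρ : ℝ, 0 < ρ → ρ ≤ rΩ → y + ρ • e ∈ Ω)

/-!
Suppose `u` has maximum `M > 0` over `closure Ω × [0, T]`, attained over `x₀`. For a slope `p` with
`‖p‖ < M / 4r`, the maximum of `u - ⟪p, x - x₀⟫` over `closure Ω × [0, t]`, truncated below at
`M / 2`, increases by at least `M / 2` as `t` runs through `[0, T]`. At a time where its derivative
does not vanish it is attained at a point `(x, t)` with `∇u = p`, `D²u ≤ 0`, and `u_t` at least that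
derivative. Integrating over `p` and applying the area formula on each time slice, which needs no
time derivative of `∇u`, gives
`M / 2 * ∫ p in ball 0 (M / 4r), g p ≤ ∫ X in contactSet, |det D²u| * g (∇u) * u_t`
for every weight `g ≥ 0`. With `g p = (κ + ‖p‖)⁻ⁿ` the equation bounds `|det D²u| * g (∇u)` by a
multiple of `(|f| / κ)ⁿ + |b|ⁿ`, and for fixed `x` the integral of `u_t` over the contact times is
at most `M`, because `u(x, ·)` is monotone along them. For `κ > ‖f‖` the right-hand side is then
`O(M)`, while the integral of `g` grows like `log (M / (κ r))`; hence `M ≤ N r κ`.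
-/

open Filter Topology Module
open scoped MatrixOrder

/-! ### Positive semidefinite matrices -/

section LinearAlgebra

variable {ι : Type*} [Fintype ι]

lemma det_le_trace_pow [DecidableEq ι] {H : Matrix ι ι ℝ} (hH : H.PosSemidef) :
    H.det ≤ H.trace ^ Fintype.card ι := by
  have htrace : H.trace = ∑ i, hH.1.eigenvalues i := by
    simpa using hH.1.trace_eq_sum_eigenvalues
  calc H.det = ∏ i, hH.1.eigenvalues i := by simpa using hH.1.det_eq_prod_eigenvalues
    _ ≤ ∏ _i : ι, H.trace :=
        Finset.prod_le_prod (fun i _ => hH.eigenvalues_nonneg i) fun i _ =>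
          htrace ▸ Finset.single_le_sum (fun j _ => hH.eigenvalues_nonneg j) (Finset.mem_univ i)
    _ = H.trace ^ Fintype.card ι := by simp

lemma mul_trace_le_sum_mul {c : ℝ} {a H : Matrix ι ι ℝ} (hH : H.PosSemidef)
    (ha : ∀ ξ : ι → ℝ, c * ∑ i, ξ i ^ 2 ≤ ∑ i, ∑ j, a i j * ξ i * ξ j) :
    c * H.trace ≤ ∑ i, ∑ j, a i j * H i j := by
  classical
  obtain ⟨B, hB⟩ := CStarAlgebra.nonneg_iff_eq_star_mul_self.1 hH.nonneg
  have hentry : ∀ i j, H i j = ∑ k, B k i * B k j := fun i j => by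
    simp [hB, Matrix.mul_apply, Matrix.star_eq_conjTranspose]
  calc c * H.trace = ∑ k, c * ∑ i, B k i ^ 2 := by
        simp only [Matrix.trace, Matrix.diag_apply, hentry, sq, Finset.mul_sum]
        exact Finset.sum_comm
    _ ≤ ∑ k, ∑ i, ∑ j, a i j * B k i * B k j := Finset.sum_le_sum fun k _ => ha (B k)
    _ = ∑ i, ∑ j, a i j * H i j := by
        simp only [hentry, Finset.mul_sum, mul_assoc]
        rw [Finset.sum_comm]
        exact Finset.sum_congr rfl fun i _ => Finset.sum_comm

end LinearAlgebra

/-! ### The area formula and the logarithmic weight -/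

section MeasureTheory

lemma measurableSet_inter_preimage_of_continuousOn {α β : Type*} [TopologicalSpace α]
    [MeasurableSpace α] [OpensMeasurableSpace α] [TopologicalSpace β] [MeasurableSpace β]
    [BorelSpace β] {φ : α → β} {s : Set α} (hφ : ContinuousOn φ s) (hs : MeasurableSet s)
    {B : Set β} (hB : MeasurableSet B) : MeasurableSet (s ∩ φ ⁻¹' B) := by
  have h := (continuousOn_iff_continuous_domRestrict.1 hφ).measurable hB
  rw [← Subtype.image_preimage_coe]
  exact hs.subtype_image h

variable {E : Type*} [NormedAddCommGroup E] [NormedSpace ℝ E] [FiniteDimensional ℝ E]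
  [MeasurableSpace E] [BorelSpace E] (μ : Measure E) [μ.IsAddHaarMeasure]

lemma restrict_image_le_map_withDensity_det {s : Set E} (hs : MeasurableSet s) {φ : E → E}
    {φ' : E → E →L[ℝ] E} (hφ : ∀ x ∈ s, HasFDerivWithinAt φ (φ' x) s x) :
    μ.restrict (φ '' s) ≤
      ((μ.restrict s).withDensity fun x => ENNReal.ofReal |(φ' x).det|).map φ := by
  have hcont : ContinuousOn φ s := fun x hx => (hφ x hx).continuousWithinAt
  refine Measure.le_iff.2 fun B hB => ?_
  have hm := measurableSet_inter_preimage_of_continuousOn hcont hs hB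
  have hφm : AEMeasurable φ ((μ.restrict s).withDensity fun x => ENNReal.ofReal |(φ' x).det|) :=
    (hcont.aemeasurable hs).mono_ac (withDensity_absolutelyContinuous _ _)
  rw [Measure.restrict_apply hB, Measure.map_apply_of_aemeasurable hφm hB]
  calc μ (B ∩ φ '' s) = μ (φ '' (s ∩ φ ⁻¹' B)) := by
        rw [image_inter_preimage, inter_comm]
    _ ≤ ∫⁻ x in s ∩ φ ⁻¹' B, ENNReal.ofReal |(φ' x).det| ∂μ :=
        addHaar_image_le_lintegral_abs_det_fderiv μ hm
          fun x hx => (hφ x hx.1).mono inter_subset_left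
    _ = (μ.restrict s).withDensity (fun x => ENNReal.ofReal |(φ' x).det|) (s ∩ φ ⁻¹' B) := by
        rw [withDensity_apply _ hm, Measure.restrict_restrict hm, inter_right_comm, inter_self]
    _ ≤ _ := measure_mono inter_subset_right

lemma lintegral_image_le_lintegral_abs_det_mul {s : Set E} (hs : MeasurableSet s) {φ : E → E}
    {φ' : E → E →L[ℝ] E} (hφ : ∀ x ∈ s, HasFDerivWithinAt φ (φ' x) s x) {g : E → ℝ≥0∞}
    (hg : Measurable g) :
    ∫⁻ y in φ '' s, g y ∂μ ≤ ∫⁻ x in s, ENNReal.ofReal |(φ' x).det| * g (φ x) ∂μ := by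
  have hcont : ContinuousOn φ s := fun x hx => (hφ x hx).continuousWithinAt
  calc ∫⁻ y in φ '' s, g y ∂μ
      ≤ ∫⁻ y, g y ∂((μ.restrict s).withDensity fun x => ENNReal.ofReal |(φ' x).det|).map φ :=
        lintegral_mono' (restrict_image_le_map_withDensity_det μ hs hφ) le_rfl
    _ = ∫⁻ x, g (φ x) ∂(μ.restrict s).withDensity fun x => ENNReal.ofReal |(φ' x).det| :=
        lintegral_map' hg.aemeasurable
          ((hcont.aemeasurable hs).mono_ac (withDensity_absolutelyContinuous _ _))
    _ = ∫⁻ x in s, ENNReal.ofReal |(φ' x).det| * g (φ x) ∂μ :=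
        lintegral_withDensity_eq_lintegral_mul_non_measurable₀ _
          (aemeasurable_ofReal_abs_det_fderivWithin μ hs hφ) (by simp) _

variable [Nontrivial E]

lemma mul_measure_ball_le_measure_shell {R : ℝ} (hR : 0 ≤ R) :
    ENNReal.ofReal (R ^ finrank ℝ E) * μ (ball 0 1) ≤ μ (ball 0 (2 * R) \ ball 0 R) := by
  have hd : finrank ℝ E ≠ 0 := finrank_pos.ne'
  rw [measure_sdiff (ball_subset_ball (by linarith)) measurableSet_ball.nullMeasurableSet
    measure_ball_lt_top.ne, Measure.addHaar_ball μ 0 hR,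
    Measure.addHaar_ball μ 0 (mul_nonneg zero_le_two hR)]
  have hball : μ (ball 0 1) ≠ ⊤ := measure_ball_lt_top.ne
  refine ENNReal.le_sub_of_add_le_left (by finiteness) ?_
  rw [← add_mul, ← ENNReal.ofReal_add (by positivity) (by positivity), mul_pow, ← two_mul]
  gcongr
  exact le_self_pow₀ one_le_two hd

lemma mul_measure_ball_le_lintegral_shell {κ R : ℝ} (hκ : 0 < κ) (hκR : κ ≤ R) :
    ENNReal.ofReal (4⁻¹ ^ finrank ℝ E) * μ (ball 0 1) ≤
      ∫⁻ p in ball 0 (2 * R) \ ball 0 R, ENNReal.ofReal ((κ + ‖p‖) ^ finrank ℝ E)⁻¹ ∂μ := by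
  have hR : 0 < R := hκ.trans_le hκR
  calc ENNReal.ofReal (4⁻¹ ^ finrank ℝ E) * μ (ball 0 1)
      = ENNReal.ofReal ((4 * R) ^ finrank ℝ E)⁻¹ *
          (ENNReal.ofReal (R ^ finrank ℝ E) * μ (ball 0 1)) := by
        rw [← mul_assoc, ← ENNReal.ofReal_mul (by positivity), ← inv_pow, ← mul_pow]
        congr 3
        field_simp
    _ ≤ ENNReal.ofReal ((4 * R) ^ finrank ℝ E)⁻¹ * μ (ball 0 (2 * R) \ ball 0 R) := by
        gcongr
        exact mul_measure_ball_le_measure_shell μ hR.le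
    _ = ∫⁻ _p in ball 0 (2 * R) \ ball 0 R, ENNReal.ofReal ((4 * R) ^ finrank ℝ E)⁻¹ ∂μ :=
        (setLIntegral_const _ _).symm
    _ ≤ _ := by
        refine setLIntegral_mono' (measurableSet_ball.diff measurableSet_ball) fun p hp => ?_
        have : ‖p‖ < 2 * R := by simpa using hp.1
        gcongr
        linarith

lemma nat_mul_measure_ball_le_lintegral_weight {κ : ℝ} (hκ : 0 < κ) (m : ℕ) :
    m * (ENNReal.ofReal (4⁻¹ ^ finrank ℝ E) * μ (ball 0 1)) ≤
      ∫⁻ p in ball 0 (κ * 2 ^ m), ENNReal.ofReal ((κ + ‖p‖) ^ finrank ℝ E)⁻¹ ∂μ := by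
  induction m with
  | zero => simp
  | succ m ih =>
    have hκm : κ ≤ κ * 2 ^ m := le_mul_of_one_le_right hκ.le (one_le_pow₀ one_le_two)
    have hsub : ball (0 : E) (κ * 2 ^ m) ⊆ ball 0 (2 * (κ * 2 ^ m)) :=
      ball_subset_ball (by linarith)
    rw [show κ * 2 ^ (m + 1) = 2 * (κ * 2 ^ m) by ring, ← union_sdiff_cancel hsub,
      lintegral_union (measurableSet_ball.diff measurableSet_ball) disjoint_sdiff_right,
      Nat.cast_succ, add_mul, one_mul]
    exact add_le_add ih (mul_measure_ball_le_lintegral_shell μ hκ hκm)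

end MeasureTheory

/-! ### One-variable calculus and second-order conditions -/

section Calculus

lemma nonneg_of_hasDerivAt_of_eventually_le_left {k : ℝ → ℝ} {d t : ℝ} (hk : HasDerivAt k d t)
    (h : ∀ᶠ s in 𝓝[<] t, k s ≤ k t) : 0 ≤ d := by
  refine ge_of_tendsto (hasDerivWithinAt_iff_tendsto_slope' self_notMem_Iio |>.1
    (hk.hasDerivWithinAt (s := Iio t))) ?_
  filter_upwards [h, self_mem_nhdsWithin] with s hs hst
  rw [slope_def_field]
  exact div_nonneg_of_nonpos (sub_nonpos.2 hs) (sub_nonpos.2 (le_of_lt hst))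

lemma deriv_deriv_nonpos_of_isLocalMax {φ : ℝ → ℝ} {x : ℝ} (hφ : ContinuousAt φ x)
    (h : IsLocalMax φ x) : deriv (deriv φ) x ≤ 0 := by
  by_contra! hpos
  have hmin : IsLocalMin φ x := isLocalMin_of_deriv_deriv_pos hpos h.deriv_eq_zero hφ
  have hconst : φ =ᶠ[𝓝 x] fun _ => φ x := by
    filter_upwards [h, hmin] with s hmax hmin using le_antisymm hmax hmin
  simp [hconst.deriv.deriv_eq] at hpos

lemma second_fderiv_apply_nonpos_of_isLocalMax {E : Type*} [NormedAddCommGroup E]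
    [NormedSpace ℝ E] {f : E → ℝ} {f' : E → E →L[ℝ] ℝ} {f'' : E →L[ℝ] E →L[ℝ] ℝ} {x : E}
    (hf : ∀ᶠ y in 𝓝 x, HasFDerivAt f (f' y) y) (hf' : HasFDerivAt f' f'' x)
    (h : IsLocalMax f x) (v : E) : f'' v v ≤ 0 := by
  have hline : ∀ s : ℝ, HasDerivAt (fun s : ℝ => x + s • v) v s := fun s => by
    simpa using ((hasDerivAt_id s).smul_const v).const_add x
  have hline0 : x + (0 : ℝ) • v = x := by simp
  have htend : Tendsto (fun s : ℝ => x + s • v) (𝓝 0) (𝓝 x) := by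
    simpa using (hline 0).continuousAt.tendsto
  have hderiv : ∀ᶠ s in 𝓝 (0 : ℝ), HasDerivAt (fun s => f (x + s • v)) (f' (x + s • v) v) s := by
    filter_upwards [htend.eventually hf] with s hs using hs.comp_hasDerivAt s (hline s)
  have hsecond : HasDerivAt (fun s : ℝ => f' (x + s • v) v) (f'' v v) 0 := by
    have : HasFDerivAt f' f'' (x + (0 : ℝ) • v) := by rwa [hline0]
    have hcomp : HasDerivAt (fun s : ℝ => f' (x + s • v)) (f'' v) 0 :=
      this.comp_hasDerivAt 0 (hline 0)
    simpa using hcomp.clm_apply (hasDerivAt_const (0 : ℝ) v)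
  have hmax : IsLocalMax (fun s : ℝ => f (x + s • v)) 0 := by
    filter_upwards [htend.eventually h] with s hs
    simpa only [hline0] using hs
  rw [← (hsecond.congr_of_eventuallyEq (hderiv.mono fun s hs => hs.deriv)).deriv]
  exact deriv_deriv_nonpos_of_isLocalMax hderiv.self_of_nhds.continuousAt hmax

lemma ofReal_sub_le_lintegral_deriv {F : ℝ → ℝ} {a b : ℝ} (hab : a ≤ b)
    (hF : AbsolutelyContinuousOnInterval F a b) :
    ENNReal.ofReal (F b - F a) ≤ ∫⁻ t in Ioo a b, ENNReal.ofReal (deriv F t) := by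
  have hint : IntegrableOn (deriv F) (Ioo a b) :=
    (intervalIntegrable_iff_integrableOn_Ioo_of_le hab).1 hF.intervalIntegrable_deriv
  rw [← hF.integral_deriv_eq_sub, intervalIntegral.integral_of_le hab,
    integral_Ioc_eq_integral_Ioo, integral_eq_lintegral_pos_part_sub_lintegral_neg_part hint]
  exact (ENNReal.ofReal_le_ofReal (sub_le_self _ ENNReal.toReal_nonneg)).trans
    ENNReal.ofReal_toReal_le

end Calculus

/-! ### Running maxima -/

/-- The running maximum `max m (max_{x ∈ K, 0 ≤ s ≤ t} w(x, s))` of `w`, truncated below at `m`;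
meaningful for `0 ≤ t`. The times `s` are written `σ * t` with `σ ∈ [0, 1]`, so that the
supremum is over a compact set independent of `t`. -/
def runningMax {α : Type*} (K : Set α) (m : ℝ) (w : α → ℝ → ℝ) (t : ℝ) : ℝ :=
  max m (sSup ((fun z : α × ℝ => w z.1 (z.2 * t)) '' (K ×ˢ Icc 0 1)))

section RunningMax

variable {α : Type*} {K : Set α} {m : ℝ}

lemma left_le_runningMax (w : α → ℝ → ℝ) (t : ℝ) : m ≤ runningMax K m w t := le_max_left _ _

lemma runningMax_le {w : α → ℝ → ℝ} (hK : K.Nonempty) {t c : ℝ} (ht : 0 ≤ t) (hm : m ≤ c)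
    (h : ∀ x ∈ K, ∀ s ∈ Icc 0 t, w x s ≤ c) : runningMax K m w t ≤ c := by
  refine max_le hm (csSup_le ((hK.prod ⟨0, left_mem_Icc.2 zero_le_one⟩).image _) ?_)
  rintro _ ⟨⟨x, σ⟩, ⟨hx, hσ⟩, rfl⟩
  exact h x hx _ ⟨mul_nonneg hσ.1 ht, mul_le_of_le_one_left ht hσ.2⟩

variable [TopologicalSpace α]

lemma continuous_runningMax {β : Type*} [TopologicalSpace β] {w : β → α → ℝ → ℝ}
    (hK : IsCompact K) (hw : Continuous fun z : β × α × ℝ => w z.1 z.2.1 z.2.2) :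
    Continuous fun z : β × ℝ => runningMax K m (w z.1) z.2 := by
  refine continuous_const.max (IsCompact.continuous_sSup
    (f := fun (z : β × ℝ) (y : α × ℝ) => w z.1 y.1 (y.2 * z.2)) (hK.prod isCompact_Icc) ?_)
  exact hw.comp (by fun_prop :
    Continuous fun y : (β × ℝ) × α × ℝ => (y.1.1, y.2.1, y.2.2 * y.1.2))

variable {w : α → ℝ → ℝ}

lemma le_runningMax (hK : IsCompact K) (hw : Continuous (Function.uncurry w)) {x : α} (hx : x ∈ K)
    {s t : ℝ} (hs : 0 ≤ s) (hst : s ≤ t) : w x s ≤ runningMax K m w t := by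
  have hcont : Continuous fun z : α × ℝ => w z.1 (z.2 * t) :=
    hw.comp (by fun_prop : Continuous fun z : α × ℝ => (z.1, z.2 * t))
  have hσ : s / t * t = s :=
    div_mul_cancel_of_imp fun ht => le_antisymm (ht ▸ hst) hs
  refine le_max_of_le_right (le_csSup ((hK.prod isCompact_Icc).image hcont).bddAbove
    ⟨(x, s / t), ⟨hx, div_nonneg hs (hs.trans hst), div_le_one_of_le₀ hst (hs.trans hst)⟩, ?_⟩)
  simp only [hσ]

lemma runningMax_mono (hK : IsCompact K) (hne : K.Nonempty) (hw : Continuous (Function.uncurry w))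
    {s t : ℝ} (hs : 0 ≤ s) (hst : s ≤ t) : runningMax K m w s ≤ runningMax K m w t :=
  runningMax_le hne hs (left_le_runningMax w t) fun _ hx _ hσ =>
    le_runningMax hK hw hx hσ.1 (hσ.2.trans hst)

lemma lipschitzOnWith_runningMax (hK : IsCompact K) (hne : K.Nonempty)
    (hw : Continuous (Function.uncurry w)) {a b : ℝ} (ha : 0 ≤ a) {L : NNReal}
    (hL : ∀ x ∈ K, ∀ s σ, a ≤ s → s ≤ σ → σ ≤ b → m ≤ w x σ → w x σ - w x s ≤ L * (σ - s)) :
    LipschitzOnWith L (runningMax K m w) (Icc a b) := by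
  refine LipschitzOnWith.of_le_add_mul L fun t ht s hs => ?_
  rcases le_total t s with hts | hst
  · exact (runningMax_mono hK hne hw (ha.trans ht.1) hts).trans
      (le_add_of_nonneg_right (by positivity))
  have hm : m ≤ runningMax K m w s + L * dist t s :=
    (left_le_runningMax w s).trans (le_add_of_nonneg_right (by positivity))
  refine runningMax_le hne (ha.trans ht.1) hm fun x hx σ hσ => ?_
  rcases le_total σ s with hσs | hsσ
  · exact (le_runningMax hK hw hx hσ.1 hσs).trans (le_add_of_nonneg_right (by positivity))
  rcases le_total (w x σ) m with hwm | hmw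
  · exact hwm.trans hm
  have hstep := hL x hx s σ hs.1 hsσ (hσ.2.trans ht.2) hmw
  have hmax : w x s ≤ runningMax K m w s := le_runningMax hK hw hx (ha.trans hs.1) le_rfl
  have hdist : (L : ℝ) * (σ - s) ≤ L * dist t s := by
    rw [Real.dist_eq, abs_of_nonneg (sub_nonneg.2 hst)]
    gcongr
    exact hσ.2
  linarith

/-- If no point of `K` realises the running maximum at time `t` itself, the running maximum is
constant just after `t`. -/
lemma exists_eq_runningMax_of_deriv_ne_zero (hK : IsCompact K) (hne : K.Nonempty)
    (hw : Continuous (Function.uncurry w)) {t : ℝ} (ht : 0 ≤ t)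
    (hderiv : deriv (runningMax K m w) t ≠ 0) : ∃ x ∈ K, w x t = runningMax K m w t := by
  by_contra! hno
  have hlt : ∀ x ∈ K, w x t < runningMax K m w t := fun x hx =>
    (le_runningMax hK hw hx ht le_rfl).lt_of_ne (hno x hx)
  have hev : ∀ᶠ s in 𝓝 t, ∀ x ∈ K, w x s < runningMax K m w t :=
    hK.eventually_forall_of_forall_eventually fun x hx =>
      (hw.comp continuous_swap).continuousAt.eventually_lt continuousAt_const (hlt x hx)
  obtain ⟨ε, hε, hball⟩ := Metric.eventually_nhds_iff.1 hev
  have hconst : ∀ᶠ s in 𝓝[>] t, runningMax K m w s = runningMax K m w t := by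
    filter_upwards [Ioo_mem_nhdsGT (lt_add_of_pos_right t hε)] with s hs
    refine le_antisymm (runningMax_le hne (ht.trans hs.1.le) (left_le_runningMax w t)
      fun x hx σ hσ => ?_) (runningMax_mono hK hne hw ht hs.1.le)
    rcases le_or_gt σ t with hσt | hσt
    · exact le_runningMax hK hw hx hσ.1 hσt
    · refine (hball ?_ x hx).le
      rw [Real.dist_eq, abs_of_pos (sub_pos.2 hσt)]
      linarith [hσ.2, hs.2]
  have hdiff := (differentiableAt_of_deriv_ne_zero hderiv).hasDerivAt
  exact hderiv ((uniqueDiffWithinAt_Ioi t).eq_deriv _ hdiff.hasDerivWithinAt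
    ((hasDerivWithinAt_const t _ _).congr_of_eventuallyEq hconst rfl))

lemma deriv_runningMax_le (hK : IsCompact K) (hw : Continuous (Function.uncurry w)) {x : α}
    (hx : x ∈ K) {t d : ℝ} (ht : 0 < t) (hxt : w x t = runningMax K m w t)
    (hd : HasDerivAt (w x) d t) : deriv (runningMax K m w) t ≤ d := by
  have hpast : ∀ᶠ s in 𝓝[<] t, 0 < s ∧ s < t := Ioo_mem_nhdsLT ht
  by_cases hF : DifferentiableAt ℝ (runningMax K m w) t
  · refine sub_nonneg.1 (nonneg_of_hasDerivAt_of_eventually_le_left (hd.sub hF.hasDerivAt) ?_)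
    filter_upwards [hpast] with s hs
    simpa [hxt] using le_runningMax hK hw hx hs.1.le le_rfl
  · rw [deriv_zero_of_not_differentiableAt hF]
    refine nonneg_of_hasDerivAt_of_eventually_le_left hd ?_
    filter_upwards [hpast] with s hs
    exact hxt ▸ le_runningMax hK hw hx hs.1.le hs.2.le

end RunningMax

/-! ### Calculus of `C^{2,1}` functions -/

/-- The spatial gradient of `u`. -/
def grad (u : En n × ℝ → ℝ) (X : En n × ℝ) : En n := WithLp.toLp 2 fun i => Dx u i X

/-- The spatial Hessian of `u`, with the index order that makes it the Jacobian matrix of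
`grad u`. -/
def hess (u : En n × ℝ → ℝ) (X : En n × ℝ) : Matrix (Fin n) (Fin n) ℝ :=
  Matrix.of fun i j => Dxx u j i X

section IsC21

variable {u v : En n × ℝ → ℝ} {Q : Set (En n × ℝ)} {X : En n × ℝ}

lemma eventually_mem_spatial_slice (hQ : IsOpen Q) (hX : X ∈ Q) : ∀ᶠ x in 𝓝 X.1, (x, X.2) ∈ Q :=
  (Continuous.prodMk_left X.2).continuousAt.eventually (hQ.mem_nhds hX)

lemma eventually_mem_time_slice (hQ : IsOpen Q) (hX : X ∈ Q) : ∀ᶠ t in 𝓝 X.2, (X.1, t) ∈ Q :=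
  (Continuous.prodMk_right X.1).continuousAt.eventually (hQ.mem_nhds hX)

lemma eqOn_Dt (hQ : IsOpen Q) (h : EqOn u v Q) : EqOn (Dt u) (Dt v) Q := fun _ hX =>
  EventuallyEq.deriv_eq ((eventually_mem_time_slice hQ hX).mono fun _ ht => h ht)

lemma eqOn_Dx (hQ : IsOpen Q) (h : EqOn u v Q) (i : Fin n) : EqOn (Dx u i) (Dx v i) Q :=
  fun _ hX => congrArg (fun ℓ : En n →L[ℝ] ℝ => ℓ (EuclideanSpace.single i 1))
    (EventuallyEq.fderiv_eq ((eventually_mem_spatial_slice hQ hX).mono fun _ hx => h hx))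

lemma eqOn_Dxx (hQ : IsOpen Q) (h : EqOn u v Q) (i j : Fin n) :
    EqOn (Dxx u i j) (Dxx v i j) Q :=
  eqOn_Dx hQ (eqOn_Dx hQ h j) i

lemma eqOn_Lop (a : En n × ℝ → Matrix (Fin n) (Fin n) ℝ) (b : En n × ℝ → En n) (hQ : IsOpen Q)
    (h : EqOn u v Q) : EqOn (Lop a b u) (Lop a b v) Q := fun X hX => by
  simp only [Lop, eqOn_Dx hQ h _ hX, eqOn_Dxx hQ h _ _ hX]

lemma IsC21.mono (hu : IsC21 u Q) {Q' : Set (En n × ℝ)} (h : Q' ⊆ Q) : IsC21 u Q' where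
  cont := hu.cont.mono h
  diff_t X hX := hu.diff_t X (h hX)
  diff_x X hX := hu.diff_x X (h hX)
  diff_xx j X hX := hu.diff_xx j X (h hX)
  cont_t := hu.cont_t.mono h
  cont_x i := (hu.cont_x i).mono h
  cont_xx i j := (hu.cont_xx i j).mono h

lemma IsC21.congr (hu : IsC21 u Q) (hQ : IsOpen Q) (h : EqOn v u Q) : IsC21 v Q where
  cont := hu.cont.congr h
  diff_t X hX := (hu.diff_t X hX).congr_of_eventuallyEq
    ((eventually_mem_time_slice hQ hX).mono fun _ ht => h ht)
  diff_x X hX := (hu.diff_x X hX).congr_of_eventuallyEq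
    ((eventually_mem_spatial_slice hQ hX).mono fun _ hx => h hx)
  diff_xx j X hX := (hu.diff_xx j X hX).congr_of_eventuallyEq
    ((eventually_mem_spatial_slice hQ hX).mono fun _ hx => eqOn_Dx hQ h j hx)
  cont_t := hu.cont_t.congr (eqOn_Dt hQ h)
  cont_x i := (hu.cont_x i).congr (eqOn_Dx hQ h i)
  cont_xx i j := (hu.cont_xx i j).congr (eqOn_Dxx hQ h i j)

lemma IsC21.continuousOn_grad (hu : IsC21 u Q) : ContinuousOn (grad u) Q :=
  (PiLp.continuous_toLp 2 _).comp_continuousOn (continuousOn_pi.2 hu.cont_x)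

lemma IsC21.continuousOn_hess (hu : IsC21 u Q) : ContinuousOn (hess u) Q :=
  continuousOn_pi.2 fun i => continuousOn_pi.2 fun j => hu.cont_xx j i

lemma eq_of_apply_single_eq {ℓ ℓ' : En n →L[ℝ] ℝ}
    (h : ∀ i, ℓ (EuclideanSpace.single i 1) = ℓ' (EuclideanSpace.single i 1)) : ℓ = ℓ' :=
  ContinuousLinearMap.coe_injective
    ((EuclideanSpace.basisFun (Fin n) ℝ).toBasis.ext fun i => by simpa using h i)

lemma IsC21.hasDerivAt_time (hu : IsC21 u Q) (hX : X ∈ Q) :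
    HasDerivAt (fun t => u (X.1, t)) (Dt u X) X.2 :=
  (hu.diff_t X hX).hasDerivAt

lemma IsC21.hasFDerivAt (hu : IsC21 u Q) (hX : X ∈ Q) :
    HasFDerivAt (fun x => u (x, X.2)) (innerSL ℝ (grad u X)) X.1 := by
  refine (hu.diff_x X hX).hasFDerivAt.congr_fderiv (eq_of_apply_single_eq fun i => ?_)
  simp [grad, Dx, EuclideanSpace.inner_single_right]

lemma IsC21.hasFDerivAt_grad (hu : IsC21 u Q) (hX : X ∈ Q) :
    HasFDerivAt (fun x => grad u (x, X.2)) (Matrix.toEuclideanCLM (𝕜 := ℝ) (hess u X)) X.1 := by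
  rw [← hasFDerivWithinAt_univ, hasFDerivWithinAt_euclidean]
  intro j
  rw [hasFDerivWithinAt_univ]
  refine (hu.diff_xx j X hX).hasFDerivAt.congr_fderiv (eq_of_apply_single_eq fun i => ?_)
  simp [hess, Dxx, Dx, Matrix.ofLp_toEuclideanCLM, Matrix.mulVec_single]

lemma det_toEuclideanCLM (A : Matrix (Fin n) (Fin n) ℝ) :
    (Matrix.toEuclideanCLM (𝕜 := ℝ) A).det = A.det :=
  LinearMap.det_toLpLin 2 A

lemma IsC21.hasFDerivAt_innerSL_grad (hu : IsC21 u Q) (hX : X ∈ Q) :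
    HasFDerivAt (fun x => innerSL ℝ (grad u (x, X.2)))
      ((innerSL ℝ : En n →L[ℝ] En n →L[ℝ] ℝ).comp (Matrix.toEuclideanCLM (𝕜 := ℝ) (hess u X)))
      X.1 :=
  (innerSL ℝ : En n →L[ℝ] En n →L[ℝ] ℝ).hasFDerivAt.comp X.1 (hu.hasFDerivAt_grad hX)

lemma IsC21.eventually_hasFDerivAt (hu : IsC21 u Q) (hQ : IsOpen Q) (hX : X ∈ Q) :
    ∀ᶠ y in 𝓝 X.1, HasFDerivAt (fun x => u (x, X.2)) (innerSL ℝ (grad u (y, X.2))) y :=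
  (eventually_mem_spatial_slice hQ hX).mono fun y hy => hu.hasFDerivAt (X := (y, X.2)) hy

lemma IsC21.isHermitian_hess (hu : IsC21 u Q) (hQ : IsOpen Q) (hX : X ∈ Q) :
    (hess u X).IsHermitian := by
  ext i j
  have hsymm := second_derivative_symmetric_of_eventually (hu.eventually_hasFDerivAt hQ hX)
    (hu.hasFDerivAt_innerSL_grad hX) (EuclideanSpace.single i 1) (EuclideanSpace.single j 1)
  simpa [EuclideanSpace.inner_single_right, Matrix.ofLp_toEuclideanCLM] using hsymm

lemma hasFDerivAt_inner_sub (p x₀ x : En n) :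
    HasFDerivAt (fun y => ⟪p, y - x₀⟫) (innerSL ℝ p) x :=
  (innerSL ℝ p).hasFDerivAt.comp x ((hasFDerivAt_id x).sub_const x₀)

lemma IsC21.grad_eq_of_isLocalMax (hu : IsC21 u Q) (hX : X ∈ Q) {p x₀ : En n}
    (hmax : IsLocalMax (fun x => u (x, X.2) - ⟪p, x - x₀⟫) X.1) : grad u X = p :=
  (innerSL_inj (𝕜 := ℝ)).1 (sub_eq_zero.1
    (hmax.hasFDerivAt_eq_zero ((hu.hasFDerivAt hX).sub (hasFDerivAt_inner_sub p x₀ X.1))))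

lemma IsC21.posSemidef_neg_hess_of_isLocalMax (hu : IsC21 u Q) (hQ : IsOpen Q) (hX : X ∈ Q)
    {p x₀ : En n} (hmax : IsLocalMax (fun x => u (x, X.2) - ⟪p, x - x₀⟫) X.1) :
    (-hess u X).PosSemidef := by
  have hsecond := second_fderiv_apply_nonpos_of_isLocalMax
    ((hu.eventually_hasFDerivAt hQ hX).mono fun x hx => hx.sub (hasFDerivAt_inner_sub p x₀ x))
    ((hu.hasFDerivAt_innerSL_grad hX).sub_const (innerSL ℝ p)) hmax
  refine .of_dotProduct_mulVec_nonneg (hu.isHermitian_hess hQ hX).neg fun ξ => ?_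
  have hξ : ⟪WithLp.toLp 2 ξ, Matrix.toEuclideanCLM (𝕜 := ℝ) (hess u X) (WithLp.toLp 2 ξ)⟫ ≤ 0 :=
    (real_inner_comm _ _).trans_le (hsecond _)
  rw [Matrix.inner_toEuclideanCLM] at hξ
  simpa [Matrix.neg_mulVec] using hξ

end IsC21

/-! ### Tilted maxima -/

/-- The standing situation of the argument: on the cylinder `Ω × (0, T]` the `C^{2,1}` function `u`
is nonpositive on the parabolic boundary and has its maximum `M > 0` over the closed cylinder at a
point with spatial coordinate `x₀`, and `Ω` lies within distance `r` of `x₀`. -/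
structure IsPeak (Ω : Set (En n)) (u : En n × ℝ → ℝ) (T r M : ℝ) (x₀ : En n) : Prop where
  isOpen : IsOpen Ω
  isCompact_closure : IsCompact (closure Ω)
  r_pos : 0 < r
  M_pos : 0 < M
  isC21 : IsC21 u (Ω ×ˢ Ioc 0 T)
  continuous : Continuous u
  mem_closure : x₀ ∈ closure Ω
  exists_eq : ∃ τ ∈ Icc 0 T, u (x₀, τ) = M
  le_max : ∀ x ∈ closure Ω, ∀ t ∈ Icc 0 T, u (x, t) ≤ M
  nonpos_of_mem_frontier : ∀ x ∈ frontier Ω, ∀ t ∈ Icc 0 T, u (x, t) ≤ 0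
  nonpos_initial : ∀ x ∈ closure Ω, u (x, 0) ≤ 0
  norm_sub_le : ∀ x ∈ closure Ω, ‖x - x₀‖ ≤ r

lemma exists_isPeak {Ω : Set (En n)} {T r : ℝ} {u : En n × ℝ → ℝ} (hr : 0 < r)
    (hΩ : IsOpen Ω) (hbdd : Bornology.IsBounded Ω) (hdiam : Metric.diam Ω ≤ r)
    (hu : IsC21 u (Ω ×ˢ Ioo 0 T)) (hcont : Continuous u)
    (hbdry : ∀ X ∈ frontier Ω ×ˢ Ioo 0 T ∪ Ω ×ˢ {0}, u X ≤ 0)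
    {X : En n × ℝ} (hX : X ∈ Ω ×ˢ Ioo 0 T) (hpos : 0 < u X) :
    ∃ M x₀, IsPeak Ω u X.2 r M x₀ ∧ u X ≤ M := by
  have hXmem : X ∈ closure Ω ×ˢ Icc 0 X.2 := ⟨subset_closure hX.1, hX.2.1.le, le_rfl⟩
  obtain ⟨⟨x₀, τ⟩, ⟨hx₀, hτ⟩, hmax⟩ :=
    (hbdd.isCompact_closure.prod isCompact_Icc).exists_isMaxOn ⟨X, hXmem⟩ hcont.continuousOn
  have hinitial : ∀ x ∈ closure Ω, u (x, 0) ≤ 0 :=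
    closure_minimal (fun x hx => hbdry (x, 0) (Or.inr ⟨hx, rfl⟩))
      (isClosed_le (hcont.comp (Continuous.prodMk_left 0)) continuous_const)
  refine ⟨u (x₀, τ), x₀, ⟨hΩ, hbdd.isCompact_closure, hr, hpos.trans_le (hmax hXmem),
    hu.mono (prod_mono_right (Ioc_subset_Ioo_right hX.2.2)), hcont, hx₀, ⟨τ, hτ, rfl⟩,
    fun x hx t ht => hmax (mk_mem_prod hx ht), fun x hx t ht => ?_, hinitial, fun x hx => ?_⟩,
    hmax hXmem⟩
  · rcases ht.1.eq_or_lt with rfl | ht0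
    · exact hinitial x (frontier_subset_closure hx)
    · exact hbdry (x, t) (Or.inl ⟨hx, ht0, ht.2.trans_lt hX.2.2⟩)
  · rw [← dist_eq_norm]
    exact (Metric.dist_le_diam_of_mem hbdd.closure hx hx₀).trans
      ((Metric.diam_closure Ω).trans_le hdiam)

/-- `u` minus the linear function of slope `p` vanishing at `x₀`. -/
def tilt (u : En n × ℝ → ℝ) (x₀ p : En n) (x : En n) (t : ℝ) : ℝ := u (x, t) - ⟪p, x - x₀⟫

/-- The running maximum over `closure Ω` of the tilted function, truncated below at `M / 2`. -/
def tiltMax (Ω : Set (En n)) (u : En n × ℝ → ℝ) (M : ℝ) (x₀ p : En n) (t : ℝ) : ℝ :=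
  runningMax (closure Ω) (M / 2) (tilt u x₀ p) t

namespace IsPeak

variable {Ω : Set (En n)} {u : En n × ℝ → ℝ} {T r M : ℝ} {x₀ : En n}

lemma nonempty_closure (h : IsPeak Ω u T r M x₀) : (closure Ω).Nonempty := ⟨x₀, h.mem_closure⟩

lemma isC21_Ioo (h : IsPeak Ω u T r M x₀) : IsC21 u (Ω ×ˢ Ioo 0 T) :=
  h.isC21.mono (prod_mono_right Ioo_subset_Ioc_self)

lemma isOpen_cylinder (h : IsPeak Ω u T r M x₀) : IsOpen (Ω ×ˢ Ioo 0 T) := h.isOpen.prod isOpen_Ioo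

lemma T_pos (h : IsPeak Ω u T r M x₀) : 0 < T := by
  obtain ⟨τ, hτ, hM⟩ := h.exists_eq
  refine (hτ.1.lt_of_ne ?_).trans_le hτ.2
  rintro rfl
  exact (h.M_pos.trans_eq hM.symm).not_ge (h.nonpos_initial x₀ h.mem_closure)

lemma continuous_tilt (h : IsPeak Ω u T r M x₀) :
    Continuous fun z : En n × En n × ℝ => tilt u x₀ z.1 z.2.1 z.2.2 := by
  have := h.continuous
  unfold tilt
  fun_prop

lemma continuous_tilt_apply (h : IsPeak Ω u T r M x₀) (p : En n) :
    Continuous (Function.uncurry (tilt u x₀ p)) :=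
  h.continuous_tilt.comp (Continuous.prodMk_right p)

lemma continuous_tiltMax (h : IsPeak Ω u T r M x₀) :
    Continuous fun z : En n × ℝ => tiltMax Ω u M x₀ z.1 z.2 :=
  continuous_runningMax h.isCompact_closure h.continuous_tilt

lemma tilt_le_tiltMax (h : IsPeak Ω u T r M x₀) (p : En n) {x : En n} (hx : x ∈ closure Ω)
    {s t : ℝ} (hs : 0 ≤ s) (hst : s ≤ t) : tilt u x₀ p x s ≤ tiltMax Ω u M x₀ p t :=
  le_runningMax h.isCompact_closure (h.continuous_tilt_apply p) hx hs hst

lemma mem_of_pos (h : IsPeak Ω u T r M x₀) {x : En n} (hx : x ∈ closure Ω) {t : ℝ}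
    (ht : t ∈ Icc 0 T) (hpos : 0 < u (x, t)) : x ∈ Ω := by
  by_contra hxΩ
  refine hpos.not_ge (h.nonpos_of_mem_frontier x ?_ t ht)
  exact h.isOpen.frontier_eq ▸ ⟨hx, hxΩ⟩

lemma abs_inner_le (h : IsPeak Ω u T r M x₀) {p : En n} (hp : ‖p‖ ≤ M / (4 * r)) {x : En n}
    (hx : x ∈ closure Ω) : |⟪p, x - x₀⟫| ≤ M / 4 := by
  have hr := h.r_pos
  calc |⟪p, x - x₀⟫| ≤ ‖p‖ * ‖x - x₀‖ := abs_real_inner_le_norm _ _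
    _ ≤ M / (4 * r) * r := mul_le_mul hp (h.norm_sub_le x hx) (norm_nonneg _)
        ((norm_nonneg _).trans hp)
    _ = M / 4 := by field_simp

lemma le_of_half_le_tilt (h : IsPeak Ω u T r M x₀) {p : En n} (hp : ‖p‖ ≤ M / (4 * r)) {x : En n}
    (hx : x ∈ closure Ω) {t : ℝ} (ht : M / 2 ≤ tilt u x₀ p x t) : M / 4 ≤ u (x, t) := by
  have := (abs_le.1 (h.abs_inner_le hp hx)).1
  unfold tilt at ht
  linarith

lemma mem_of_half_le_tilt (h : IsPeak Ω u T r M x₀) {p : En n} (hp : ‖p‖ ≤ M / (4 * r)) {x : En n}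
    (hx : x ∈ closure Ω) {t : ℝ} (ht : t ∈ Icc 0 T) (hM : M / 2 ≤ tilt u x₀ p x t) : x ∈ Ω :=
  h.mem_of_pos hx ht ((div_pos h.M_pos four_pos).trans_le (h.le_of_half_le_tilt hp hx hM))

lemma exists_initial_time (h : IsPeak Ω u T r M x₀) :
    ∃ t₀ ∈ Ioo 0 T, ∀ x ∈ closure Ω, ∀ t ∈ Icc 0 t₀, u (x, t) < M / 4 := by
  have hsmall : ∀ᶠ t in 𝓝 (0 : ℝ), ∀ x ∈ closure Ω, u (x, t) < M / 4 :=
    h.isCompact_closure.eventually_forall_of_forall_eventually fun x hx =>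
      (h.continuous.comp continuous_swap).continuousAt.eventually_lt continuousAt_const
        ((h.nonpos_initial x hx).trans_lt (div_pos h.M_pos four_pos))
  obtain ⟨ε, hε, hball⟩ := Metric.eventually_nhds_iff.1 hsmall
  obtain ⟨t₀, ht₀, hlt⟩ := exists_between (lt_min hε h.T_pos)
  refine ⟨t₀, ⟨ht₀, hlt.trans_le (min_le_right _ _)⟩, fun x hx t ht => hball ?_ x hx⟩
  rw [Real.dist_eq, sub_zero, abs_of_nonneg ht.1]
  exact ht.2.trans_lt (hlt.trans_le (min_le_left _ _))

/-- The points where `u` ever reaches `M / 4` form a compact subset of `Ω`. -/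
lemma exists_forall_abs_Dt_le (h : IsPeak Ω u T r M x₀) {t₀ : ℝ} (ht₀ : 0 < t₀) :
    ∃ L : NNReal, ∀ x ∈ closure Ω, (∃ s ∈ Icc 0 T, M / 4 ≤ u (x, s)) →
      ∀ t ∈ Icc t₀ T, |Dt u (x, t)| ≤ L := by
  have hcompact : IsCompact (closure Ω ×ˢ Icc 0 T ∩ {z | M / 4 ≤ u z}) :=
    (h.isCompact_closure.prod isCompact_Icc).inter_right
      (isClosed_le continuous_const h.continuous)
  have hsub : (Prod.fst '' (closure Ω ×ˢ Icc 0 T ∩ {z | M / 4 ≤ u z})) ×ˢ Icc t₀ T ⊆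
      Ω ×ˢ Ioc 0 T := by
    rintro ⟨_, t⟩ ⟨⟨z, ⟨hz, hMz⟩, rfl⟩, ht⟩
    exact ⟨h.mem_of_pos hz.1 hz.2 ((div_pos h.M_pos four_pos).trans_le hMz),
      ht₀.trans_le ht.1, ht.2⟩
  obtain ⟨L, hL⟩ :=
    ((hcompact.image continuous_fst).prod isCompact_Icc).exists_bound_of_continuousOn
      (h.isC21.cont_t.mono hsub)
  exact ⟨L.toNNReal, fun x hx ⟨s, hs, hus⟩ t ht =>
    (hL (x, t) ⟨⟨(x, s), ⟨⟨hx, hs⟩, hus⟩, rfl⟩, ht⟩).trans (Real.le_coe_toNNReal L)⟩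

lemma exists_lipschitzOnWith_tiltMax (h : IsPeak Ω u T r M x₀) {p : En n}
    (hp : ‖p‖ ≤ M / (4 * r)) {t₀ : ℝ} (ht₀ : 0 < t₀) :
    ∃ L, LipschitzOnWith L (tiltMax Ω u M x₀ p) (Icc t₀ T) := by
  obtain ⟨L, hL⟩ := h.exists_forall_abs_Dt_le ht₀
  refine ⟨L, lipschitzOnWith_runningMax h.isCompact_closure h.nonempty_closure
    (h.continuous_tilt_apply p) ht₀.le fun x hx s σ hs hsσ hσ hM => ?_⟩
  have hσT : σ ∈ Icc 0 T := ⟨ht₀.le.trans (hs.trans hsσ), hσ⟩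
  have hxΩ : x ∈ Ω := h.mem_of_half_le_tilt hp hx hσT hM
  have hmvt := (convex_Icc s σ).norm_image_sub_le_of_norm_hasDerivWithin_le
    (f := fun t => u (x, t)) (f' := fun t => Dt u (x, t)) (C := L)
    (fun t ht => (h.isC21.hasDerivAt_time (X := (x, t))
      ⟨hxΩ, ht₀.trans_le (hs.trans ht.1), ht.2.trans hσ⟩).hasDerivWithinAt)
    (fun t ht => hL x hx ⟨σ, hσT, h.le_of_half_le_tilt hp hx hM⟩ t
      ⟨hs.trans ht.1, ht.2.trans hσ⟩)
    (left_mem_Icc.2 hsσ) (right_mem_Icc.2 hsσ)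
  rw [Real.norm_eq_abs, Real.norm_eq_abs, abs_of_nonneg (sub_nonneg.2 hsσ)] at hmvt
  simpa only [tilt, sub_sub_sub_cancel_right] using (le_abs_self _).trans hmvt

lemma half_le_lintegral_deriv_tiltMax (h : IsPeak Ω u T r M x₀) {p : En n}
    (hp : ‖p‖ ≤ M / (4 * r)) :
    ENNReal.ofReal (M / 2) ≤ ∫⁻ t in Ioo 0 T, ENNReal.ofReal (deriv (tiltMax Ω u M x₀ p) t) := by
  obtain ⟨t₀, ht₀, hsmall⟩ := h.exists_initial_time
  obtain ⟨τ, hτ, hτM⟩ := h.exists_eq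
  obtain ⟨L, hL⟩ := h.exists_lipschitzOnWith_tiltMax hp ht₀.1
  have hstart : tiltMax Ω u M x₀ p t₀ ≤ M / 2 := by
    refine runningMax_le h.nonempty_closure ht₀.1.le le_rfl fun x hx s hs => ?_
    have hinner := (abs_le.1 (h.abs_inner_le hp hx)).1
    have hus := hsmall x hx s hs
    unfold tilt
    linarith
  have hend : M ≤ tiltMax Ω u M x₀ p T := by
    simpa [tilt, hτM] using h.tilt_le_tiltMax p h.mem_closure hτ.1 hτ.2
  rw [← uIcc_of_le ht₀.2.le] at hL
  calc ENNReal.ofReal (M / 2)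
      ≤ ENNReal.ofReal (tiltMax Ω u M x₀ p T - tiltMax Ω u M x₀ p t₀) :=
        ENNReal.ofReal_le_ofReal (by linarith)
    _ ≤ ∫⁻ t in Ioo t₀ T, ENNReal.ofReal (deriv (tiltMax Ω u M x₀ p) t) :=
        ofReal_sub_le_lintegral_deriv ht₀.2.le hL.absolutelyContinuousOnInterval
    _ ≤ _ := lintegral_mono_set (Ioo_subset_Ioo_left ht₀.1.le)

end IsPeak

/-! ### The contact set -/

/-- The points of the cylinder at which `u` minus the linear function of slope `grad u X` attains
its running maximum, for slopes of length less than `M / (4 * r)`. -/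
def contactSet (Ω : Set (En n)) (u : En n × ℝ → ℝ) (T r M : ℝ) (x₀ : En n) : Set (En n × ℝ) :=
  {X ∈ Ω ×ˢ Ioo 0 T | ‖grad u X‖ < M / (4 * r) ∧
    tilt u x₀ (grad u X) X.1 X.2 = tiltMax Ω u M x₀ (grad u X) X.2}

namespace IsPeak

variable {Ω : Set (En n)} {u : En n × ℝ → ℝ} {T r M : ℝ} {x₀ p : En n} {X : En n × ℝ}

lemma measurableSet_contactSet (h : IsPeak Ω u T r M x₀) :
    MeasurableSet (contactSet Ω u T r M x₀) := by
  have hgrad := h.isC21_Ioo.continuousOn_grad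
  have hlt := measurableSet_inter_preimage_of_continuousOn hgrad.norm
    h.isOpen_cylinder.measurableSet (measurableSet_Iio (a := M / (4 * r)))
  have heq := measurableSet_inter_preimage_of_continuousOn
    ((h.continuous_tilt.comp_continuousOn (hgrad.prodMk continuousOn_id)).sub
      (h.continuous_tiltMax.comp_continuousOn (hgrad.prodMk continuousOn_snd)))
    h.isOpen_cylinder.measurableSet (measurableSet_singleton 0)
  convert hlt.inter heq using 1
  ext X
  simp only [contactSet, mem_ofPred_eq, mem_inter_iff, mem_preimage, mem_Iio, mem_singleton_iff,
    sub_eq_zero, Function.comp_apply, id_eq, Pi.sub_apply]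
  tauto

lemma isLocalMax_tilt (h : IsPeak Ω u T r M x₀) (hX : X ∈ Ω ×ˢ Ioo 0 T)
    (hmax : tilt u x₀ p X.1 X.2 = tiltMax Ω u M x₀ p X.2) :
    IsLocalMax (fun x => u (x, X.2) - ⟪p, x - x₀⟫) X.1 :=
  (h.isOpen.eventually_mem hX.1).mono fun _ hx =>
    (h.tilt_le_tiltMax p (subset_closure hx) hX.2.1.le le_rfl).trans_eq hmax.symm

lemma posSemidef_neg_hess (h : IsPeak Ω u T r M x₀) (hX : X ∈ contactSet Ω u T r M x₀) :
    (-hess u X).PosSemidef :=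
  h.isC21_Ioo.posSemidef_neg_hess_of_isLocalMax h.isOpen_cylinder hX.1
    (h.isLocalMax_tilt hX.1 hX.2.2)

lemma le_of_mem_contactSet (h : IsPeak Ω u T r M x₀) (hX : X ∈ contactSet Ω u T r M x₀) {s : ℝ}
    (hs : s ∈ Icc 0 X.2) : u (X.1, s) ≤ u X := by
  have := (h.tilt_le_tiltMax (grad u X) (subset_closure hX.1.1) hs.1 hs.2).trans_eq hX.2.2.symm
  exact (sub_le_sub_iff_right _).1 this

lemma nonneg_of_mem_contactSet (h : IsPeak Ω u T r M x₀) (hX : X ∈ contactSet Ω u T r M x₀) :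
    0 ≤ u X :=
  (div_pos h.M_pos four_pos).le.trans (h.le_of_half_le_tilt hX.2.1.le (subset_closure hX.1.1)
    ((left_le_runningMax _ _).trans_eq hX.2.2.symm))

lemma Dt_nonneg (h : IsPeak Ω u T r M x₀) (hX : X ∈ contactSet Ω u T r M x₀) : 0 ≤ Dt u X :=
  nonneg_of_hasDerivAt_of_eventually_le_left (h.isC21_Ioo.hasDerivAt_time hX.1)
    (mem_of_superset (Ioo_mem_nhdsLT hX.1.2.1) fun _ hs =>
      h.le_of_mem_contactSet hX ⟨hs.1.le, hs.2.le⟩)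

lemma deriv_tiltMax_le_Dt (h : IsPeak Ω u T r M x₀) (hX : X ∈ contactSet Ω u T r M x₀) :
    deriv (tiltMax Ω u M x₀ (grad u X)) X.2 ≤ Dt u X :=
  deriv_runningMax_le h.isCompact_closure (h.continuous_tilt_apply _) (subset_closure hX.1.1)
    hX.1.2.1 hX.2.2 ((h.isC21_Ioo.hasDerivAt_time hX.1).sub_const _)

lemma exists_mem_contactSet (h : IsPeak Ω u T r M x₀) (hp : ‖p‖ < M / (4 * r)) {t : ℝ}
    (ht : t ∈ Ioo 0 T) (hderiv : deriv (tiltMax Ω u M x₀ p) t ≠ 0) :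
    ∃ x, (x, t) ∈ contactSet Ω u T r M x₀ ∧ grad u (x, t) = p := by
  obtain ⟨x, hx, hmax⟩ := exists_eq_runningMax_of_deriv_ne_zero h.isCompact_closure
    h.nonempty_closure (h.continuous_tilt_apply p) ht.1.le hderiv
  have hX : (x, t) ∈ Ω ×ˢ Ioo 0 T := ⟨h.mem_of_half_le_tilt hp.le hx (Ioo_subset_Icc_self ht)
    ((left_le_runningMax _ _).trans_eq hmax.symm), ht⟩
  have hgrad := h.isC21_Ioo.grad_eq_of_isLocalMax hX (h.isLocalMax_tilt hX hmax)
  exact ⟨x, ⟨hX, by rwa [hgrad], by rwa [hgrad]⟩, hgrad⟩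

end IsPeak

/-! ### The parabolic Alexandrov inequality -/

section Slices

variable {α β : Type*} [MeasurableSpace α] [MeasurableSpace β] {μ : Measure α} {ν : Measure β}
  [SFinite ν] {A : Set (α × β)} {F : α × β → ℝ≥0∞}

lemma setLIntegral_prod_eq_lintegral_slice (hA : MeasurableSet A)
    (hF : AEMeasurable F ((μ.prod ν).restrict A)) :
    ∫⁻ z in A, F z ∂μ.prod ν = ∫⁻ x, ∫⁻ y in {y | (x, y) ∈ A}, F (x, y) ∂ν ∂μ := by
  rw [← lintegral_indicator hA, lintegral_prod _ ((aemeasurable_indicator_iff hA).2 hF)]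
  refine lintegral_congr fun x => ?_
  exact (lintegral_indicator (measurable_prodMk_left hA) fun y => F (x, y)).symm ▸ rfl

lemma setLIntegral_prod_eq_lintegral_slice_symm [SFinite μ] (hA : MeasurableSet A)
    (hF : AEMeasurable F ((μ.prod ν).restrict A)) :
    ∫⁻ z in A, F z ∂μ.prod ν = ∫⁻ y, ∫⁻ x in {x | (x, y) ∈ A}, F (x, y) ∂μ ∂ν := by
  rw [← lintegral_indicator hA, lintegral_prod_symm _ ((aemeasurable_indicator_iff hA).2 hF)]
  refine lintegral_congr fun y => ?_
  exact (lintegral_indicator (measurable_prodMk_right hA) fun x => F (x, y)).symm ▸ rfl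

end Slices

namespace IsPeak

variable {Ω : Set (En n)} {u : En n × ℝ → ℝ} {T r M : ℝ} {x₀ : En n} {g : En n → ℝ≥0∞}

lemma measurable_deriv_tiltMax (h : IsPeak Ω u T r M x₀) :
    Measurable fun z : En n × ℝ => deriv (tiltMax Ω u M x₀ z.1) z.2 :=
  measurable_deriv_with_param h.continuous_tiltMax

lemma aemeasurable_restrict_contactSet {β : Type*} [TopologicalSpace β] [MeasurableSpace β]
    [BorelSpace β] {F : En n × ℝ → β} (h : IsPeak Ω u T r M x₀)
    (hF : ContinuousOn F (Ω ×ˢ Ioo 0 T)) :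
    AEMeasurable F (volume.restrict (contactSet Ω u T r M x₀)) :=
  (hF.mono fun _ hX => hX.1).aemeasurable h.measurableSet_contactSet

lemma aemeasurable_abp_integrand (h : IsPeak Ω u T r M x₀) (hg : Measurable g) :
    AEMeasurable (fun X => ENNReal.ofReal |(hess u X).det| *
      (g (grad u X) * ENNReal.ofReal (Dt u X))) (volume.restrict (contactSet Ω u T r M x₀)) := by
  have hdet := h.aemeasurable_restrict_contactSet
    (continuous_id.matrix_det.comp_continuousOn h.isC21_Ioo.continuousOn_hess).abs
  have hgrad := h.aemeasurable_restrict_contactSet h.isC21_Ioo.continuousOn_grad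
  have hDt := h.aemeasurable_restrict_contactSet h.isC21_Ioo.cont_t
  exact hdet.ennreal_ofReal.mul ((hg.comp_aemeasurable hgrad).mul hDt.ennreal_ofReal)

lemma measurableSet_slice_contactSet (h : IsPeak Ω u T r M x₀) (t : ℝ) :
    MeasurableSet {x | (x, t) ∈ contactSet Ω u T r M x₀} :=
  measurable_prodMk_right h.measurableSet_contactSet

/-- Fixing the time makes the area formula applicable to the gradient map, which has no derivative
in time. -/
lemma setLIntegral_ball_le_setLIntegral_slice (h : IsPeak Ω u T r M x₀) (hg : Measurable g) {t : ℝ}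
    (ht : t ∈ Ioo 0 T) :
    ∫⁻ p in ball 0 (M / (4 * r)), g p * ENNReal.ofReal (deriv (tiltMax Ω u M x₀ p) t) ≤
      ∫⁻ x in {x | (x, t) ∈ contactSet Ω u T r M x₀}, ENNReal.ofReal |(hess u (x, t)).det| *
        (g (grad u (x, t)) * ENNReal.ofReal (Dt u (x, t))) := by
  set slice := {x | (x, t) ∈ contactSet Ω u T r M x₀}
  set w : En n → ℝ≥0∞ := fun p => g p * ENNReal.ofReal (deriv (tiltMax Ω u M x₀ p) t)
  have hw : Measurable w :=
    hg.mul (h.measurable_deriv_tiltMax.comp measurable_prodMk_right).ennreal_ofReal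
  have hsupport : (ball 0 (M / (4 * r)) ∩ Function.support w) ⊆
      (fun x => grad u (x, t)) '' slice := fun p ⟨hp, hwp⟩ =>
    h.exists_mem_contactSet (mem_ball_zero_iff.1 hp) ht fun hderiv => hwp (by simp [w, hderiv])
  calc ∫⁻ p in ball 0 (M / (4 * r)), w p
      = ∫⁻ p in ball 0 (M / (4 * r)) ∩ Function.support w, w p := by
        rw [inter_comm, ← Measure.restrict_restrict (measurableSet_support hw),
          setLIntegral_eq_of_support_subset subset_rfl]
    _ ≤ ∫⁻ p in (fun x => grad u (x, t)) '' slice, w p := lintegral_mono_set hsupport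
    _ ≤ ∫⁻ x in slice, ENNReal.ofReal |(hess u (x, t)).det| * w (grad u (x, t)) := by
        simpa only [det_toEuclideanCLM] using lintegral_image_le_lintegral_abs_det_mul volume
          (h.measurableSet_slice_contactSet t) (φ := fun x => grad u (x, t))
          (fun x hx => (h.isC21_Ioo.hasFDerivAt_grad (X := (x, t)) hx.1).hasFDerivWithinAt) hw
    _ ≤ _ := by
        refine setLIntegral_mono' (h.measurableSet_slice_contactSet t) fun x hx => ?_
        exact mul_le_mul_right (mul_le_mul_right
          (ENNReal.ofReal_le_ofReal (h.deriv_tiltMax_le_Dt hx)) _) _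

theorem half_mul_setLIntegral_ball_le (h : IsPeak Ω u T r M x₀) (hg : Measurable g) :
    ENNReal.ofReal (M / 2) * ∫⁻ p in ball 0 (M / (4 * r)), g p ≤
      ∫⁻ X in contactSet Ω u T r M x₀,
        ENNReal.ofReal |(hess u X).det| * (g (grad u X) * ENNReal.ofReal (Dt u X)) := by
  calc ENNReal.ofReal (M / 2) * ∫⁻ p in ball 0 (M / (4 * r)), g p
      = ∫⁻ p in ball 0 (M / (4 * r)), g p * ENNReal.ofReal (M / 2) := by
        rw [lintegral_mul_const _ hg, mul_comm]
    _ ≤ ∫⁻ p in ball 0 (M / (4 * r)), g p *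
          ∫⁻ t in Ioo 0 T, ENNReal.ofReal (deriv (tiltMax Ω u M x₀ p) t) := by
        refine setLIntegral_mono' measurableSet_ball fun p hp => ?_
        gcongr
        exact h.half_le_lintegral_deriv_tiltMax (mem_ball_zero_iff.1 hp).le
    _ = ∫⁻ t in Ioo 0 T, ∫⁻ p in ball 0 (M / (4 * r)),
          g p * ENNReal.ofReal (deriv (tiltMax Ω u M x₀ p) t) := by
        rw [← lintegral_lintegral_swap ((hg.comp measurable_fst).mul
          h.measurable_deriv_tiltMax.ennreal_ofReal).aemeasurable]
        exact lintegral_congr fun p => (lintegral_const_mul _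
          (h.measurable_deriv_tiltMax.comp measurable_prodMk_left).ennreal_ofReal).symm
    _ ≤ ∫⁻ t in Ioo 0 T, ∫⁻ x in {x | (x, t) ∈ contactSet Ω u T r M x₀},
          ENNReal.ofReal |(hess u (x, t)).det| *
            (g (grad u (x, t)) * ENNReal.ofReal (Dt u (x, t))) :=
        setLIntegral_mono' measurableSet_Ioo fun t ht =>
          h.setLIntegral_ball_le_setLIntegral_slice hg ht
    _ ≤ _ := by
        rw [Measure.volume_eq_prod, setLIntegral_prod_eq_lintegral_slice_symm
          h.measurableSet_contactSet (h.aemeasurable_abp_integrand hg)]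
        exact setLIntegral_le_lintegral _ _

end IsPeak

/-! ### Bounds on the contact set -/

section Pointwise

variable {u f : En n × ℝ → ℝ} {X : En n × ℝ} {a : En n × ℝ → Matrix (Fin n) (Fin n) ℝ}
  {b : En n × ℝ → En n} {ν κ : ℝ}

lemma Lop_eq_sum_add_inner (a : En n × ℝ → Matrix (Fin n) (Fin n) ℝ) (b : En n × ℝ → En n)
    (hH : (hess u X).IsHermitian) :
    Lop a b u X = ∑ i, ∑ j, a X i j * hess u X i j + ⟪b X, grad u X⟫ := by
  have hsymm : ∀ i j, Dxx u i j X = hess u X i j := fun i j => hH.apply i j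
  simp [Lop, hsymm, grad, PiLp.inner_apply, mul_comm]

lemma trace_neg_hess_le (hν : 0 < ν)
    (ha : ∀ ξ : Fin n → ℝ, ν⁻¹ * ∑ i, ξ i ^ 2 ≤ ∑ i, ∑ j, a X i j * ξ i * ξ j)
    (hH : (-hess u X).PosSemidef) (hf : f X ≤ Lop a b u X) :
    (-hess u X).trace ≤ ν * (|f X| + ‖b X‖ * ‖grad u X‖) := by
  rw [Lop_eq_sum_add_inner a b (by simpa using hH.1.neg)] at hf
  have htrace : ν⁻¹ * (-hess u X).trace ≤ -∑ i, ∑ j, a X i j * hess u X i j := by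
    simpa using mul_trace_le_sum_mul hH ha
  rw [inv_mul_le_iff₀ hν] at htrace
  refine htrace.trans ?_
  gcongr
  linarith [neg_abs_le (f X), real_inner_le_norm (b X) (grad u X)]

/-- The weight `(κ + ‖p‖)⁻ⁿ` at `p = grad u X` absorbs the gradient multiplying the drift. -/
lemma abs_det_hess_mul_weight_le (hν : 0 < ν) (hκ : 0 < κ)
    (ha : ∀ ξ : Fin n → ℝ, ν⁻¹ * ∑ i, ξ i ^ 2 ≤ ∑ i, ∑ j, a X i j * ξ i * ξ j)
    (hH : (-hess u X).PosSemidef) (hf : f X ≤ Lop a b u X) :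
    |(hess u X).det| * ((κ + ‖grad u X‖) ^ n)⁻¹ ≤
      (2 * ν) ^ n * ((κ⁻¹ * |f X|) ^ n + ‖b X‖ ^ n) := by
  have hdet : |(hess u X).det| ≤ (-hess u X).trace ^ n := by
    have habs : |(hess u X).det| = |(-hess u X).det| := by
      rw [Matrix.det_neg, abs_mul, abs_pow, abs_neg, abs_one, one_pow, one_mul]
    simpa [habs, abs_of_nonneg hH.det_nonneg] using det_le_trace_pow hH
  have hsplit : |f X| + ‖b X‖ * ‖grad u X‖ ≤ (κ⁻¹ * |f X| + ‖b X‖) * (κ + ‖grad u X‖) :=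
    calc |f X| + ‖b X‖ * ‖grad u X‖
        ≤ |f X| + ‖b X‖ * ‖grad u X‖ + (κ⁻¹ * |f X| * ‖grad u X‖ + ‖b X‖ * κ) :=
          le_add_of_nonneg_right (by positivity)
      _ = (κ⁻¹ * |f X| + ‖b X‖) * (κ + ‖grad u X‖) := by field_simp; ring
  rw [← div_eq_mul_inv, div_le_iff₀ (by positivity)]
  calc |(hess u X).det| ≤ (-hess u X).trace ^ n := hdet
    _ ≤ (ν * ((κ⁻¹ * |f X| + ‖b X‖) * (κ + ‖grad u X‖))) ^ n :=
        pow_le_pow_left₀ hH.trace_nonneg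
          ((trace_neg_hess_le hν ha hH hf).trans (by gcongr)) n
    _ = ν ^ n * (κ⁻¹ * |f X| + ‖b X‖) ^ n * (κ + ‖grad u X‖) ^ n := by
        rw [mul_pow, mul_pow, mul_assoc]
    _ ≤ ν ^ n * (2 ^ n * ((κ⁻¹ * |f X|) ^ n + ‖b X‖ ^ n)) * (κ + ‖grad u X‖) ^ n := by
        gcongr
        refine (add_pow_le (by positivity) (norm_nonneg _) n).trans ?_
        gcongr
        · exact one_le_two
        · exact n.sub_le 1
    _ = _ := by ring

lemma ofReal_abs_det_hess_mul_weight_le (hν : 0 < ν) (hκ : 0 < κ)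
    (ha : ∀ ξ : Fin n → ℝ, ν⁻¹ * ∑ i, ξ i ^ 2 ≤ ∑ i, ∑ j, a X i j * ξ i * ξ j)
    (hH : (-hess u X).PosSemidef) (hf : f X ≤ Lop a b u X) :
    ENNReal.ofReal |(hess u X).det| * ENNReal.ofReal ((κ + ‖grad u X‖) ^ n)⁻¹ ≤
      ENNReal.ofReal (2 * ν) ^ n *
        ((ENNReal.ofReal κ⁻¹ * (‖f X‖₊ : ℝ≥0∞)) ^ n + (‖b X‖₊ : ℝ≥0∞) ^ n) := by
  have hreal := ENNReal.ofReal_le_ofReal (abs_det_hess_mul_weight_le hν hκ ha hH hf)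
  rw [ENNReal.ofReal_mul (abs_nonneg _), ENNReal.ofReal_mul (p := (2 * ν) ^ n) (by positivity),
    ENNReal.ofReal_add (by positivity) (by positivity), ENNReal.ofReal_pow (by positivity),
    ENNReal.ofReal_pow (by positivity), ENNReal.ofReal_pow (by positivity),
    ENNReal.ofReal_mul (p := κ⁻¹) (by positivity)] at hreal
  simpa only [← enorm_eq_nnnorm, ← ofReal_norm, Real.norm_eq_abs] using hreal

end Pointwise

section SliceSup

/-- The essential supremum of `|f(x, ·)|` over the time slice of `Q` at `x`; the `n`-th power of
this function is the integrand of `LxnLtinfPow`. -/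
def sliceSup {E : Type*} [NNNorm E] (f : En n × ℝ → E) (Q : Set (En n × ℝ)) (x : En n) : ℝ≥0∞ :=
  essSup (fun t => (‖f (x, t)‖₊ : ℝ≥0∞)) (volume.restrict {t | (x, t) ∈ Q})

lemma lintegral_sliceSup_pow {E : Type*} [NNNorm E] (f : En n × ℝ → E) (Q : Set (En n × ℝ)) :
    ∫⁻ x, sliceSup f Q x ^ n = LxnLtinfPow f Q := rfl

lemma lt_essSup_iff {α : Type*} [MeasurableSpace α] {μ : Measure α} {g : α → ℝ≥0∞} {c : ℝ≥0∞} :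
    c < essSup g μ ↔ μ {y | c < g y} ≠ 0 := by
  rw [← not_le, not_iff_comm, not_not]
  have hae : (∀ᵐ y ∂μ, g y ≤ c) ↔ μ {y | c < g y} = 0 := by simp only [ae_iff, not_le]
  rw [← hae]
  exact ⟨fun h => essSup_le_of_ae_le c h,
    fun h => (ENNReal.ae_le_essSup g).mono fun _ hy => hy.trans h⟩

lemma measurable_sliceSup {E : Type*} [NormedAddCommGroup E] [MeasurableSpace E]
    [OpensMeasurableSpace E] {f : En n × ℝ → E} {Q : Set (En n × ℝ)} (hf : Measurable f)
    (hQ : MeasurableSet Q) : Measurable (sliceSup f Q) := by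
  refine measurable_of_Ioi fun c => ?_
  have hlevel : MeasurableSet {X | c < (‖f X‖₊ : ℝ≥0∞)} :=
    measurableSet_lt measurable_const hf.nnnorm.coe_nnreal_ennreal
  have hset : sliceSup f Q ⁻¹' Ioi c =
      {x | volume (Prod.mk x ⁻¹' ({X | c < (‖f X‖₊ : ℝ≥0∞)} ∩ Q)) ≠ 0} := by
    ext x
    rw [mem_preimage, mem_Ioi, sliceSup, lt_essSup_iff]
    exact not_congr (Eq.congr_left (Measure.restrict_apply (measurable_prodMk_left hlevel)))
  rw [hset]
  exact measurable_measure_prodMk_left (hlevel.inter hQ) (measurableSet_singleton 0).compl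

end SliceSup

namespace IsPeak

variable {Ω : Set (En n)} {u f : En n × ℝ → ℝ} {T r M ν κ : ℝ} {x₀ : En n} {Q : Set (En n × ℝ)}
  {a : En n × ℝ → Matrix (Fin n) (Fin n) ℝ} {b : En n × ℝ → En n}

/-- `u(x, ·)` increases along the contact set from nonnegative values up to at most `M`. -/
lemma setLIntegral_slice_Dt_le (h : IsPeak Ω u T r M x₀) (x : En n) :
    ∫⁻ t in {t | (x, t) ∈ contactSet Ω u T r M x₀}, ENNReal.ofReal (Dt u (x, t)) ≤
      ENNReal.ofReal M := by
  set slice := {t | (x, t) ∈ contactSet Ω u T r M x₀}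
  have hslice : MeasurableSet slice := measurable_prodMk_left h.measurableSet_contactSet
  have hderiv : ∀ t ∈ slice, HasDerivWithinAt (fun s => u (x, s)) (Dt u (x, t)) slice t :=
    fun t ht => (h.isC21_Ioo.hasDerivAt_time (X := (x, t)) ht.1).hasDerivWithinAt
  have hmono : MonotoneOn (fun s => u (x, s)) slice :=
    fun s hs t ht hst => h.le_of_mem_contactSet (X := (x, t)) ht ⟨hs.1.2.1.le, hst⟩
  rw [lintegral_deriv_eq_volume_image_of_monotoneOn hslice hderiv hmono]
  calc volume ((fun s => u (x, s)) '' slice)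
      ≤ volume (Icc 0 M) := measure_mono (image_subset_iff.2 fun t ht =>
        ⟨h.nonneg_of_mem_contactSet ht, h.le_max x (subset_closure ht.1.1) t
          (Ioo_subset_Icc_self ht.1.2)⟩)
    _ = ENNReal.ofReal M := by rw [Real.volume_Icc, sub_zero]

lemma setLIntegral_slice_contactSet_le (h : IsPeak Ω u T r M x₀) (hν : 0 < ν) (hκ : 0 < κ)
    (hQ : Ω ×ˢ Ioo 0 T ⊆ Q)
    (ha : ∀ X ∈ Q, ∀ ξ : Fin n → ℝ, ν⁻¹ * ∑ i, ξ i ^ 2 ≤ ∑ i, ∑ j, a X i j * ξ i * ξ j)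
    (hf : ∀ X ∈ Q, f X ≤ -Dt u X + Lop a b u X) (x : En n) :
    ∫⁻ t in {t | (x, t) ∈ contactSet Ω u T r M x₀}, ENNReal.ofReal |(hess u (x, t)).det| *
        (ENNReal.ofReal ((κ + ‖grad u (x, t)‖) ^ n)⁻¹ * ENNReal.ofReal (Dt u (x, t))) ≤
      ENNReal.ofReal (2 * ν) ^ n *
        ((ENNReal.ofReal κ⁻¹ * sliceSup f Q x) ^ n + sliceSup b Q x ^ n) * ENNReal.ofReal M := by
  set slice := {t | (x, t) ∈ contactSet Ω u T r M x₀}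
  have hslice : MeasurableSet slice := measurable_prodMk_left h.measurableSet_contactSet
  have hsub : slice ⊆ {t | (x, t) ∈ Q} := fun t ht => hQ ht.1
  have hfsup : ∀ᵐ t ∂volume.restrict slice, (‖f (x, t)‖₊ : ℝ≥0∞) ≤ sliceSup f Q x :=
    ae_restrict_of_ae_restrict_of_subset hsub (ENNReal.ae_le_essSup _)
  have hbsup : ∀ᵐ t ∂volume.restrict slice, (‖b (x, t)‖₊ : ℝ≥0∞) ≤ sliceSup b Q x :=
    ae_restrict_of_ae_restrict_of_subset hsub (ENNReal.ae_le_essSup _)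
  calc _ ≤ ∫⁻ t in slice, ENNReal.ofReal (2 * ν) ^ n *
        ((ENNReal.ofReal κ⁻¹ * sliceSup f Q x) ^ n + sliceSup b Q x ^ n) *
          ENNReal.ofReal (Dt u (x, t)) := by
        refine lintegral_mono_ae ?_
        filter_upwards [hfsup, hbsup, ae_restrict_mem hslice] with t hft hbt ht
        have hLop : f (x, t) ≤ Lop a b u (x, t) :=
          (hf _ (hsub ht)).trans (add_le_of_nonpos_left (neg_nonpos.2 (h.Dt_nonneg ht)))
        rw [← mul_assoc]
        refine mul_le_mul_left ((ofReal_abs_det_hess_mul_weight_le hν hκ (ha _ (hsub ht))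
          (h.posSemidef_neg_hess ht) hLop).trans ?_) _
        gcongr
    _ = ENNReal.ofReal (2 * ν) ^ n * ((ENNReal.ofReal κ⁻¹ * sliceSup f Q x) ^ n +
          sliceSup b Q x ^ n) * ∫⁻ t in slice, ENNReal.ofReal (Dt u (x, t)) :=
        lintegral_const_mul'' _ (((h.isC21_Ioo.cont_t.comp (Continuous.prodMk_right x).continuousOn
          fun t ht => ht.1).aemeasurable hslice).ennreal_ofReal)
    _ ≤ _ := by gcongr; exact h.setLIntegral_slice_Dt_le x

lemma setLIntegral_contactSet_le (h : IsPeak Ω u T r M x₀) (hν : 0 < ν) (hκ : 0 < κ)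
    (hQ : Ω ×ˢ Ioo 0 T ⊆ Q) (hQm : MeasurableSet Q)
    (ha : ∀ X ∈ Q, ∀ ξ : Fin n → ℝ, ν⁻¹ * ∑ i, ξ i ^ 2 ≤ ∑ i, ∑ j, a X i j * ξ i * ξ j)
    (hfm : Measurable f) (hf : ∀ X ∈ Q, f X ≤ -Dt u X + Lop a b u X) :
    ∫⁻ X in contactSet Ω u T r M x₀, ENNReal.ofReal |(hess u X).det| *
        (ENNReal.ofReal ((κ + ‖grad u X‖) ^ n)⁻¹ * ENNReal.ofReal (Dt u X)) ≤
      ENNReal.ofReal (2 * ν) ^ n *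
        (ENNReal.ofReal κ⁻¹ ^ n * LxnLtinfPow f Q + LxnLtinfPow b Q) * ENNReal.ofReal M := by
  have hweight : Measurable fun p : En n => ENNReal.ofReal ((κ + ‖p‖) ^ n)⁻¹ := by fun_prop
  rw [Measure.volume_eq_prod, setLIntegral_prod_eq_lintegral_slice h.measurableSet_contactSet
    (h.aemeasurable_abp_integrand hweight)]
  have hfsup := measurable_sliceSup hfm hQm
  calc _ ≤ ∫⁻ x, ENNReal.ofReal (2 * ν) ^ n * ((ENNReal.ofReal κ⁻¹ * sliceSup f Q x) ^ n +
        sliceSup b Q x ^ n) * ENNReal.ofReal M :=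
        lintegral_mono fun x => h.setLIntegral_slice_contactSet_le hν hκ hQ ha hf x
    _ = _ := by
        rw [lintegral_mul_const' _ _ ENNReal.ofReal_ne_top,
          lintegral_const_mul' _ _ (ENNReal.pow_ne_top ENNReal.ofReal_ne_top),
          lintegral_add_left (by fun_prop), lintegral_sliceSup_pow]
        simp only [mul_pow]
        rw [lintegral_const_mul _ (hfsup.pow_const n), lintegral_sliceSup_pow]

end IsPeak

/-! ### The maximum estimate -/

lemma LxnLtinf_pow {E : Type*} [NNNorm E] (hn : n ≠ 0) (f : En n × ℝ → E) (Q : Set (En n × ℝ)) :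
    LxnLtinf f Q ^ n = LxnLtinfPow f Q := by
  rw [LxnLtinf, one_div, ENNReal.rpow_inv_natCast_pow hn]

lemma exists_continuous_eqOn_of_continuousOn {α : Type*} [TopologicalSpace α] [NormalSpace α]
    {s : Set α} (hs : IsClosed s) {u : α → ℝ} (hu : ContinuousOn u s) :
    ∃ v : α → ℝ, Continuous v ∧ EqOn v u s := by
  obtain ⟨v, hv⟩ := ContinuousMap.exists_restrict_eq hs ⟨s.domRestrict u, hu.domRestrict⟩
  exact ⟨v, v.continuous, fun x hx => DFunLike.congr_fun hv ⟨x, hx⟩⟩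

lemma parabolicBoundary_subset_closure {α : Type*} [TopologicalSpace α] {Ω : Set α} {T : ℝ}
    (hT : 0 < T) : frontier Ω ×ˢ Ioo 0 T ∪ Ω ×ˢ {0} ⊆ closure (Ω ×ˢ Ioo 0 T) := by
  rw [closure_prod_eq, closure_Ioo hT.ne]
  exact union_subset (prod_mono frontier_subset_closure Ioo_subset_Icc_self)
    (prod_mono subset_closure (singleton_subset_iff.2 (left_mem_Icc.2 hT.le)))

namespace IsPeak

variable {Ω : Set (En n)} {u f : En n × ℝ → ℝ} {T r M ν κ : ℝ} {x₀ : En n} {Q : Set (En n × ℝ)}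
  {a : En n × ℝ → Matrix (Fin n) (Fin n) ℝ} {b : En n × ℝ → En n} {B : ℝ≥0∞} {m : ℕ}

lemma nat_mul_volume_ball_le (h : IsPeak Ω u T r M x₀) (hn : 0 < n) (hν : 0 < ν) (hκ : 0 < κ)
    (hQ : Ω ×ˢ Ioo 0 T ⊆ Q) (hQm : MeasurableSet Q)
    (ha : ∀ X ∈ Q, ∀ ξ : Fin n → ℝ, ν⁻¹ * ∑ i, ξ i ^ 2 ≤ ∑ i, ∑ j, a X i j * ξ i * ξ j)
    (hb : LxnLtinfPow b Q ≤ B) (hfm : Measurable f) (hfκ : LxnLtinf f Q ≤ ENNReal.ofReal κ)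
    (hf : ∀ X ∈ Q, f X ≤ -Dt u X + Lop a b u X) (hm : κ * 2 ^ m ≤ M / (4 * r)) :
    m * (ENNReal.ofReal (4⁻¹ ^ n) * volume (ball (0 : En n) 1)) ≤
      2 * (ENNReal.ofReal (2 * ν) ^ n * (1 + B)) := by
  have : Nonempty (Fin n) := ⟨⟨0, hn⟩⟩
  have hM : ENNReal.ofReal M = ENNReal.ofReal (M / 2) * 2 := by
    rw [← ENNReal.ofReal_ofNat, ← ENNReal.ofReal_mul (half_pos h.M_pos).le,
      div_mul_cancel₀ M two_ne_zero]
  have hweight : Measurable fun p : En n => ENNReal.ofReal ((κ + ‖p‖) ^ n)⁻¹ := by fun_prop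
  have hball : m * (ENNReal.ofReal (4⁻¹ ^ n) * volume (ball (0 : En n) 1)) ≤
      ∫⁻ p in ball (0 : En n) (M / (4 * r)), ENNReal.ofReal ((κ + ‖p‖) ^ n)⁻¹ := by
    simpa only [finrank_euclideanSpace_fin] using
      (nat_mul_measure_ball_le_lintegral_weight (E := En n) volume hκ m).trans
        (lintegral_mono_set (ball_subset_ball hm))
  have hfpow : ENNReal.ofReal κ⁻¹ ^ n * LxnLtinfPow f Q ≤ 1 :=
    calc ENNReal.ofReal κ⁻¹ ^ n * LxnLtinfPow f Q
        ≤ ENNReal.ofReal κ⁻¹ ^ n * ENNReal.ofReal κ ^ n := by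
          rw [← LxnLtinf_pow hn.ne']
          gcongr
      _ = 1 := by
          rw [← mul_pow, ← ENNReal.ofReal_mul (by positivity), inv_mul_cancel₀ hκ.ne',
            ENNReal.ofReal_one, one_pow]
  refine (ENNReal.mul_le_mul_iff_right (ENNReal.ofReal_pos.2 (half_pos h.M_pos)).ne'
    ENNReal.ofReal_ne_top).1 ?_
  calc ENNReal.ofReal (M / 2) * (m * (ENNReal.ofReal (4⁻¹ ^ n) * volume (ball (0 : En n) 1)))
      ≤ ENNReal.ofReal (M / 2) *
          ∫⁻ p in ball 0 (M / (4 * r)), ENNReal.ofReal ((κ + ‖p‖) ^ n)⁻¹ := by gcongr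
    _ ≤ ENNReal.ofReal (2 * ν) ^ n *
          (ENNReal.ofReal κ⁻¹ ^ n * LxnLtinfPow f Q + LxnLtinfPow b Q) * ENNReal.ofReal M :=
        (h.half_mul_setLIntegral_ball_le hweight).trans
          (h.setLIntegral_contactSet_le hν hκ hQ hQm ha hfm hf)
    _ ≤ ENNReal.ofReal (2 * ν) ^ n * (1 + B) * ENNReal.ofReal M := by gcongr
    _ = _ := by rw [hM]; ring

lemma max_le (h : IsPeak Ω u T r M x₀) (hn : 0 < n) (hν : 0 < ν)
    (hQ : Ω ×ˢ Ioo 0 T ⊆ Q) (hQm : MeasurableSet Q)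
    (ha : ∀ X ∈ Q, ∀ ξ : Fin n → ℝ, ν⁻¹ * ∑ i, ξ i ^ 2 ≤ ∑ i, ∑ j, a X i j * ξ i * ξ j)
    (hb : LxnLtinfPow b Q ≤ B) (hfm : Measurable f) (hftop : LxnLtinf f Q ≠ ⊤)
    (hf : ∀ X ∈ Q, f X ≤ -Dt u X + Lop a b u X)
    (hm : 2 * (ENNReal.ofReal (2 * ν) ^ n * (1 + B)) <
      m * (ENNReal.ofReal (4⁻¹ ^ n) * volume (ball (0 : En n) 1))) :
    M ≤ 4 * 2 ^ m * r * (LxnLtinf f Q).toReal := by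
  have hr := h.r_pos
  have hc : 0 < 4 * 2 ^ m * r := by positivity
  rw [← div_le_iff₀' hc]
  refine le_of_forall_gt_imp_ge_of_dense fun κ hκ => ?_
  by_contra! hlt
  rw [lt_div_iff₀' hc] at hlt
  refine hm.not_ge (h.nat_mul_volume_ball_le hn hν (ENNReal.toReal_nonneg.trans_lt hκ) hQ hQm ha hb
    hfm ((ENNReal.le_ofReal_iff_toReal_le hftop (ENNReal.toReal_nonneg.trans hκ.le)).2 hκ.le) hf ?_)
  rw [le_div_iff₀' (by positivity)]
  linarith

end IsPeak

theorem abp_krylov_tso_estimate_with_drift_general (hn : 0 < n) {ν : ℝ} (hν : 0 < ν) (S : ℝ) :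
    ∃ N : ℝ, 0 < N ∧
      ∀ (Ω : Set (En n)) (T r : ℝ) (u f : En n × ℝ → ℝ)
        (a : En n × ℝ → Matrix (Fin n) (Fin n) ℝ) (b : En n × ℝ → En n),
        0 < r → IsOpen Ω → Bornology.IsBounded Ω → Metric.diam Ω ≤ r →
        IsC21 u (Ω ×ˢ Ioo 0 T) → ContinuousOn u (closure (Ω ×ˢ Ioo 0 T)) →
        (∀ X ∈ Ω ×ˢ Ioo 0 T, ∀ ξ : Fin n → ℝ,
          ν⁻¹ * ∑ i, ξ i ^ 2 ≤ ∑ i, ∑ j, a X i j * ξ i * ξ j) →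
        LxnLtinfPow b (Ω ×ˢ Ioo 0 T) ≤ ENNReal.ofReal S →
        Measurable f → LxnLtinf f (Ω ×ˢ Ioo 0 T) ≠ ⊤ →
        (∀ X ∈ Ω ×ˢ Ioo 0 T, f X ≤ -Dt u X + Lop a b u X) →
        (∀ X ∈ frontier Ω ×ˢ Ioo 0 T ∪ Ω ×ˢ {0}, u X ≤ 0) →
        ∀ X ∈ Ω ×ˢ Ioo 0 T, u X ≤ N * r * (LxnLtinf f (Ω ×ˢ Ioo 0 T)).toReal := by
  obtain ⟨m, hm⟩ := ENNReal.exists_nat_mul_gt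
    (a := ENNReal.ofReal (4⁻¹ ^ n) * volume (ball (0 : En n) 1))
    (b := 2 * (ENNReal.ofReal (2 * ν) ^ n * (1 + ENNReal.ofReal S)))
    (ENNReal.mul_pos (ENNReal.ofReal_pos.2 (by positivity)).ne'
      (measure_ball_pos _ _ one_pos).ne').ne'
    (by finiteness)
  refine ⟨4 * 2 ^ m, by positivity, fun Ω T r u f a b hr hΩ hbdd hdiam hu huc ha hb hfm hftop hf
    hbdry X hX => ?_⟩
  obtain ⟨v, hv, hvcl⟩ := exists_continuous_eqOn_of_continuousOn isClosed_closure huc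
  have hQ : IsOpen (Ω ×ˢ Ioo 0 T) := hΩ.prod isOpen_Ioo
  have hvQ : EqOn v u (Ω ×ˢ Ioo 0 T) := hvcl.mono subset_closure
  have hbdry' : ∀ Y ∈ frontier Ω ×ˢ Ioo 0 T ∪ Ω ×ˢ {0}, v Y ≤ 0 := fun Y hY =>
    (hvcl (parabolicBoundary_subset_closure (hX.2.1.trans hX.2.2) hY)).trans_le (hbdry Y hY)
  rw [← hvQ hX]
  rcases le_or_gt (v X) 0 with hX0 | hX0
  · exact hX0.trans (by positivity)
  obtain ⟨M, x₀, hpeak, hle⟩ := exists_isPeak hr hΩ hbdd hdiam (hu.congr hQ hvQ) hv hbdry' hX hX0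
  refine hle.trans (hpeak.max_le hn hν (prod_mono_right (Ioo_subset_Ioo_right hX.2.2.le))
    hQ.measurableSet ha hb hfm hftop (fun Y hY => ?_) hm)
  rw [eqOn_Dt hQ hvQ hY, eqOn_Lop a b hQ hvQ hY]
  exact hf Y hY

/-- **Alexandrov–Bakelman–Pucci–Krylov–Tso estimate with critical drift.** -/
theorem abp_krylov_tso_estimate_with_drift
    (n : ℕ) (hn : 0 < n) (ν S : ℝ) (hν : 1 ≤ ν) :
    ∃ N : ℝ, 0 < N ∧
      ∀ (Ω : Set (En n)) (T r : ℝ) (u f : En n × ℝ → ℝ)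
        (a : En n × ℝ → Matrix (Fin n) (Fin n) ℝ) (b : En n × ℝ → En n),
        0 < r → 0 < T →
        IsOpen Ω → IsConnected Ω → Bornology.IsBounded Ω → Metric.diam Ω ≤ r →
        IsC21 u (Ω ×ˢ Ioo (0 : ℝ) T) →
        ContinuousOn u (closure (Ω ×ˢ Ioo (0 : ℝ) T)) →
        UnifParabolic ν a (Ω ×ˢ Ioo (0 : ℝ) T) →
        LxnLtinfPow b (Ω ×ˢ Ioo (0 : ℝ) T) ≤ ENNReal.ofReal S →
        Measurable f →
        LxnLtinf f (Ω ×ˢ Ioo (0 : ℝ) T) ≠ ⊤ →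
        (∀ X ∈ Ω ×ˢ Ioo (0 : ℝ) T, f X ≤ -Dt u X + Lop a b u X) →
        (∀ X ∈ (frontier Ω ×ˢ Ioo (0 : ℝ) T) ∪ (Ω ×ˢ ({0} : Set ℝ)), u X ≤ 0) →
        ∀ X ∈ Ω ×ˢ Ioo (0 : ℝ) T,
          u X ≤ N * r * (LxnLtinf f (Ω ×ˢ Ioo (0 : ℝ) T)).toReal := by
  obtain ⟨N, hN, hest⟩ := abp_krylov_tso_estimate_with_drift_general hn (one_pos.trans_le hν) S
  exact ⟨N, hN, fun Ω T r u f a b hr _ hΩ _ hbdd hdiam hu huc ha =>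
    hest Ω T r u f a b hr hΩ hbdd hdiam hu huc fun X hX => (ha X hX).1⟩
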